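/- Let p < c₂ < p_s^* and λ > 0. Let u : ℝ^N → ℝ be measurable with [u]_{s,p} < ∞, suppose the integrals ∫_Ω |u|^{p_s^*} dx, ∫_Ω f(x,u)u dx and ∫_Ω F(x,u) dx are finite, and suppose 0 ≤ c₂ ∫_Ω F(x,u) dx ≤ ∫_Ω f(x,u)u dx. Then I(u) − (1/c₂)⟨I′(u),u⟩ ≥ (1/(Λ²p) − Λ²/c₂)[u]_{s,p}^p + (1/c₂ − 1/p_s^*)∫_Ω |u|^{p_s^*} dx. In particular, if Λ ∈ [1,(c₂/p)^{1/4}) then I(u) − (1/c₂)⟨I′(u),u⟩ ≥ (1/(Λ²p) − Λ²/c₂)[u]_{s,p}^p ≥ 0. -/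

import Mathlib

/-!
The growth condition on `Φ` integrates to `|t|^p / (Λ p) ≤ PΦ(t) ≤ Λ |t|^p / p` (`PPhi_bounds`).
Multiplying by the two-sided bound on `K`, and noting that everything vanishes on the diagonal
(`mul_kernel_bounds`), the two nonlocal energies are compared pointwise, hence after integration
(`lintegral_le_const_mul`), with the Gagliardo energy `G = [u]_{s,p}^p`:
`∬ PΦ(u(x) - u(y)) K ≥ G / (Λ² p)` and `∬ Φ(u(x) - u(y)) (u(x) - u(y)) K ≤ Λ² G`.
The upper bound `∬ PΦ(u(x) - u(y)) K ≤ Λ² G / p` is needed as well, because it makes the first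
energy finite, so that passing from `ℝ≥0∞` to `ℝ` preserves the lower bound.
Both the critical term and the hypothesis `c₂ ∫ F ≤ ∫ f u` then enter linearly, and
`Λ⁴ < c₂ / p` is exactly the condition for `1 / (Λ² p) - Λ² / c₂` to be positive.
-/

open MeasureTheory ENNReal

/-- The primitive `PΦ(t) = ∫_0^{|t|} Φ(τ) dτ` of `Φ`. -/
noncomputable def PPhi (Φ : ℝ → ℝ) (t : ℝ) : ℝ := ∫ τ in (0:ℝ)..|t|, Φ τ

/-- The primitive `F(x,t) = ∫_0^t f(x,τ) dτ` of the nonlinearity `f`. -/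
noncomputable def Fprim (f : α → ℝ → ℝ) (x : α) (t : ℝ) : ℝ := ∫ τ in (0:ℝ)..t, f x τ

/-- Two-sided power bounds for the primitive of `Φ`. -/
lemma PPhi_bounds {p L : ℝ} (hp : 1 < p) {Φ : ℝ → ℝ} (hΦc : Continuous Φ)
    (hΦ0 : Φ 0 = 0)
    (hΦ : ∀ t : ℝ, L⁻¹ * |t| ^ p ≤ Φ t * t ∧ Φ t * t ≤ L * |t| ^ p) (t : ℝ) :
    L⁻¹ / p * |t| ^ p ≤ PPhi Φ t ∧ PPhi Φ t ≤ L / p * |t| ^ p := by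
  have hpow : ∀ c : ℝ, ∫ τ in (0:ℝ)..|t|, c * τ ^ (p - 1) = c / p * |t| ^ p := by
    intro c
    rw [intervalIntegral.integral_const_mul, integral_rpow (Or.inl (by linarith))]
    rw [sub_add_cancel, Real.zero_rpow (by linarith)]
    ring
  have hcont : ∀ c : ℝ, Continuous fun τ : ℝ => c * τ ^ (p - 1) := fun c =>
    continuous_const.mul (Real.continuous_rpow_const (by linarith))
  -- Dividing the growth condition by `τ > 0`; at `τ = 0` both sides vanish.
  have hpt : ∀ τ ∈ Set.Icc (0:ℝ) |t|,
      L⁻¹ * τ ^ (p - 1) ≤ Φ τ ∧ Φ τ ≤ L * τ ^ (p - 1) := by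
    intro τ hτ
    rcases hτ.1.eq_or_lt with h | h
    · subst h
      rw [hΦ0, Real.zero_rpow (by linarith)]
      simp
    · have h1 := hΦ τ
      have h2 : τ ^ p = τ ^ (p - 1) * τ := by
        rw [Real.rpow_sub_one h.ne', div_mul_cancel₀ _ h.ne']
      rw [abs_of_pos h, h2, ← mul_assoc, ← mul_assoc] at h1
      exact ⟨le_of_mul_le_mul_right h1.1 h, le_of_mul_le_mul_right h1.2 h⟩
  unfold PPhi
  rw [← hpow, ← hpow]
  exact ⟨intervalIntegral.integral_mono_on (abs_nonneg t) ((hcont _).intervalIntegrable _ _)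
      (hΦc.intervalIntegrable _ _) fun τ hτ => (hpt τ hτ).1,
    intervalIntegral.integral_mono_on (abs_nonneg t) (hΦc.intervalIntegrable _ _)
      ((hcont _).intervalIntegrable _ _) fun τ hτ => (hpt τ hτ).2⟩

/-- Combines bounds on a nonlinearity and on a kernel at a pair of points; the kernel bounds are
only required when `d` (the points coincide) fails, while `d` forces `a = 0`, hence `b = 0`. -/
lemma mul_kernel_bounds {L a b c₁ c₂ r k : ℝ} {d : Prop} (hL : 1 ≤ L) (ha : 0 ≤ a) (hr : 0 ≤ r)
    (hc₁ : 0 ≤ c₁) (had : d → a = 0) (hb : c₁ * a ≤ b ∧ b ≤ c₂ * a)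
    (hk : ¬ d → 1 / (L * r) ≤ k ∧ k ≤ L / r) :
    c₁ / L * (a / r) ≤ b * k ∧ b * k ≤ c₂ * L * (a / r) := by
  have hL0 : 0 < L := by linarith
  by_cases hd : d
  · have h0 := had hd
    subst h0
    have : b = 0 := by linarith [hb.1, hb.2]
    simp [this]
  · obtain ⟨h1, h2⟩ := hk hd
    have hb0 : 0 ≤ b := (mul_nonneg hc₁ ha).trans hb.1
    constructor
    · calc c₁ / L * (a / r) = c₁ * a * (1 / (L * r)) := by
            rw [div_mul_div_comm, mul_one_div]
        _ ≤ b * k := mul_le_mul hb.1 h1 (by positivity) hb0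
    · calc b * k ≤ c₂ * a * (L / r) :=
            mul_le_mul hb.2 h2 (le_trans (by positivity) h1) (hb0.trans hb.2)
        _ = c₂ * L * (a / r) := by ring

lemma lintegral_le_const_mul {α : Type*} [MeasurableSpace α] {μ : Measure α} {c : ℝ} (hc : 0 ≤ c)
    {g h : α → α → ℝ} (hgh : ∀ x y, g x y ≤ c * h x y) :
    (∫⁻ x, ∫⁻ y, ENNReal.ofReal (g x y) ∂μ ∂μ)
      ≤ ENNReal.ofReal c * ∫⁻ x, ∫⁻ y, ENNReal.ofReal (h x y) ∂μ ∂μ := by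
  rw [← lintegral_const_mul' _ _ ENNReal.ofReal_ne_top]
  refine lintegral_mono fun x => ?_
  rw [← lintegral_const_mul' _ _ ENNReal.ofReal_ne_top]
  refine lintegral_mono fun y => ?_
  rw [← ENNReal.ofReal_mul hc]
  exact ENNReal.ofReal_le_ofReal (hgh x y)

/-- the key Palais–Smale estimate:
`I(u) − (1/c₂)⟨I′(u),u⟩ ≥ (1/(Λ²p) − Λ²/c₂)[u]_{s,p}^p + (1/c₂ − 1/p_s^*)∫_Ω |u|^{p_s^*}`;
in particular if `Λ < (c₂/p)^{1/4}` then
`I(u) − (1/c₂)⟨I′(u),u⟩ ≥ (1/(Λ²p) − Λ²/c₂)[u]_{s,p}^p ≥ 0`. -/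
theorem stmt9 (N : ℕ) (hN : 0 < N) (s p Λ pstar c₂ : ℝ)
    (hs : 0 < s) (hs1 : s < 1) (hp : 1 < p) (hsp : s * p < N) (hΛ : 1 ≤ Λ)
    (hpstar : pstar = N * p / (N - s * p)) (hpc₂ : p < c₂) (hc₂p : c₂ < pstar)
    (Φ : ℝ → ℝ) (hΦc : Continuous Φ) (hΦ0 : Φ 0 = 0)
    (hΦ : ∀ t : ℝ, Λ⁻¹ * |t| ^ p ≤ Φ t * t ∧ Φ t * t ≤ Λ * |t| ^ p)
    (K : EuclideanSpace ℝ (Fin N) → EuclideanSpace ℝ (Fin N) → ℝ)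
    (hKm : Measurable (fun q : EuclideanSpace ℝ (Fin N) × EuclideanSpace ℝ (Fin N) => K q.1 q.2))
    (hK : ∀ x y, x ≠ y →
      1 / (Λ * ‖x - y‖ ^ ((N : ℝ) + s * p)) ≤ K x y ∧ K x y ≤ Λ / ‖x - y‖ ^ ((N : ℝ) + s * p))
    (Ω : Set (EuclideanSpace ℝ (Fin N))) (hΩo : IsOpen Ω) (hΩb : Bornology.IsBounded Ω)
    (lam : ℝ) (hlam : 0 < lam)
    (f : EuclideanSpace ℝ (Fin N) → ℝ → ℝ)
    (hf : Measurable (fun q : EuclideanSpace ℝ (Fin N) × ℝ => f q.1 q.2))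
    (u : EuclideanSpace ℝ (Fin N) → ℝ) (hu : Measurable u)
    (hgag : (∫⁻ x, ∫⁻ y, ENNReal.ofReal (|u x - u y| ^ p / ‖x - y‖ ^ ((N : ℝ) + s * p))) ≠ ∞)
    (hint1 : IntegrableOn (fun x => |u x| ^ pstar) Ω)
    (hint2 : IntegrableOn (fun x => f x (u x) * u x) Ω)
    (hint3 : IntegrableOn (fun x => Fprim f x (u x)) Ω)
    (hF : 0 ≤ c₂ * ∫ x in Ω, Fprim f x (u x))
    (hFf : c₂ * (∫ x in Ω, Fprim f x (u x)) ≤ ∫ x in Ω, f x (u x) * u x) :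
    ((1 / (Λ ^ 2 * p) - Λ ^ 2 / c₂) *
          (∫⁻ x, ∫⁻ y, ENNReal.ofReal (|u x - u y| ^ p / ‖x - y‖ ^ ((N : ℝ) + s * p))).toReal
        + (1 / c₂ - 1 / pstar) * (∫ x in Ω, |u x| ^ pstar)
      ≤ ((∫⁻ x, ∫⁻ y, ENNReal.ofReal (PPhi Φ (u x - u y) * K x y)).toReal
            - (1 / pstar) * (∫ x in Ω, |u x| ^ pstar)
            - lam * ∫ x in Ω, Fprim f x (u x))
        - (1 / c₂) *
          ((∫⁻ x, ∫⁻ y, ENNReal.ofReal (Φ (u x - u y) * (u x - u y) * K x y)).toReal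
            - (∫ x in Ω, |u x| ^ pstar)
            - lam * ∫ x in Ω, f x (u x) * u x)) ∧
    (Λ < (c₂ / p) ^ ((1:ℝ) / 4) →
      0 ≤ (1 / (Λ ^ 2 * p) - Λ ^ 2 / c₂) *
          (∫⁻ x, ∫⁻ y, ENNReal.ofReal (|u x - u y| ^ p / ‖x - y‖ ^ ((N : ℝ) + s * p))).toReal ∧
      (1 / (Λ ^ 2 * p) - Λ ^ 2 / c₂) *
          (∫⁻ x, ∫⁻ y, ENNReal.ofReal (|u x - u y| ^ p / ‖x - y‖ ^ ((N : ℝ) + s * p))).toReal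
        ≤ ((∫⁻ x, ∫⁻ y, ENNReal.ofReal (PPhi Φ (u x - u y) * K x y)).toReal
            - (1 / pstar) * (∫ x in Ω, |u x| ^ pstar)
            - lam * ∫ x in Ω, Fprim f x (u x))
          - (1 / c₂) *
            ((∫⁻ x, ∫⁻ y, ENNReal.ofReal (Φ (u x - u y) * (u x - u y) * K x y)).toReal
              - (∫ x in Ω, |u x| ^ pstar)
              - lam * ∫ x in Ω, f x (u x) * u x)) := by
  have hp0 : 0 < p := by linarith
  have hΛ0 : 0 < Λ := by linarith
  have hc₂ : 0 < c₂ := by linarith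
  have hdiag : ∀ x y, x = y → |u x - u y| ^ p = 0 := by
    rintro x _ rfl
    simp [Real.zero_rpow hp0.ne']
  have hP : ∀ x y, Λ⁻¹ / p / Λ * (|u x - u y| ^ p / ‖x - y‖ ^ ((N : ℝ) + s * p))
        ≤ PPhi Φ (u x - u y) * K x y ∧
      PPhi Φ (u x - u y) * K x y
        ≤ Λ / p * Λ * (|u x - u y| ^ p / ‖x - y‖ ^ ((N : ℝ) + s * p)) := fun x y =>
    mul_kernel_bounds hΛ (by positivity) (by positivity) (by positivity) (hdiag x y)
      (PPhi_bounds hp hΦc hΦ0 hΦ _) (hK x y)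
  have hQ : ∀ x y, Φ (u x - u y) * (u x - u y) * K x y
        ≤ Λ * Λ * (|u x - u y| ^ p / ‖x - y‖ ^ ((N : ℝ) + s * p)) := fun x y =>
    (mul_kernel_bounds hΛ (by positivity) (by positivity) (by positivity) (hdiag x y)
      (hΦ _) (hK x y)).2
  have hPup := lintegral_le_const_mul (μ := volume) (by positivity) fun x y => (hP x y).2
  have hQup := lintegral_le_const_mul (μ := volume) (by positivity) hQ
  have hPlow := lintegral_le_const_mul (μ := volume) (c := Λ ^ 2 * p) (by positivity)
    (g := fun x y => |u x - u y| ^ p / ‖x - y‖ ^ ((N : ℝ) + s * p))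
    (h := fun x y => PPhi Φ (u x - u y) * K x y) fun x y => by
      have h := mul_le_mul_of_nonneg_left (hP x y).1 (by positivity : 0 ≤ Λ ^ 2 * p)
      refine le_trans (le_of_eq ?_) h
      rw [← mul_assoc, show Λ ^ 2 * p * (Λ⁻¹ / p / Λ) = 1 by field_simp, one_mul]
  have hPfin := ne_top_of_le_ne_top (ENNReal.mul_ne_top ENNReal.ofReal_ne_top hgag) hPup
  have hPlow' := ENNReal.toReal_mono (ENNReal.mul_ne_top ENNReal.ofReal_ne_top hPfin) hPlow
  have hQup' := ENNReal.toReal_mono (ENNReal.mul_ne_top ENNReal.ofReal_ne_top hgag) hQup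
  rw [ENNReal.toReal_mul, ENNReal.toReal_ofReal (by positivity)] at hPlow' hQup'
  have hU : 0 ≤ ∫ x in Ω, |u x| ^ pstar := integral_nonneg fun x => by positivity
  have hG : 0 ≤ (∫⁻ x, ∫⁻ y, ENNReal.ofReal
      (|u x - u y| ^ p / ‖x - y‖ ^ ((N : ℝ) + s * p))).toReal := ENNReal.toReal_nonneg
  clear hPlow hQup hPup hPfin hgag
  generalize (∫⁻ x, ∫⁻ y, ENNReal.ofReal
      (|u x - u y| ^ p / ‖x - y‖ ^ ((N : ℝ) + s * p))).toReal = G at *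
  generalize (∫⁻ x, ∫⁻ y, ENNReal.ofReal (PPhi Φ (u x - u y) * K x y)).toReal = A at *
  generalize (∫⁻ x, ∫⁻ y, ENNReal.ofReal
      (Φ (u x - u y) * (u x - u y) * K x y)).toReal = B at *
  generalize (∫ x in Ω, |u x| ^ pstar) = U at *
  generalize (∫ x in Ω, Fprim f x (u x)) = V at *
  generalize (∫ x in Ω, f x (u x) * u x) = W at *
  have h1 : 1 / (Λ ^ 2 * p) * G ≤ A := by
    rw [one_div_mul_eq_div, div_le_iff₀ (by positivity)]
    linarith
  have h2 : 1 / c₂ * B ≤ Λ ^ 2 / c₂ * G := by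
    rw [one_div_mul_eq_div, div_mul_eq_mul_div]
    gcongr
    linarith
  have h3 : lam * V ≤ 1 / c₂ * (lam * W) := by
    rw [one_div_mul_eq_div, le_div_iff₀ hc₂]
    nlinarith
  have hmain : (1 / (Λ ^ 2 * p) - Λ ^ 2 / c₂) * G + (1 / c₂ - 1 / pstar) * U
      ≤ (A - (1 / pstar) * U - lam * V) - (1 / c₂) * (B - U - lam * W) := by
    linarith
  refine ⟨hmain, fun hlt => ?_⟩
  have h4 : Λ ^ 4 < c₂ / p := by
    have h := pow_lt_pow_left₀ hlt hΛ0.le (n := 4) (by norm_num)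
    rwa [← Real.rpow_natCast (_ ^ _) 4, ← Real.rpow_mul (by positivity),
      show (1:ℝ) / 4 * ((4:ℕ) : ℝ) = 1 by norm_num, Real.rpow_one] at h
  have h5 : Λ ^ 2 / c₂ ≤ 1 / (Λ ^ 2 * p) := by
    rw [lt_div_iff₀ hp0] at h4
    rw [div_le_div_iff₀ hc₂ (by positivity)]
    linarith
  have h6 : 0 ≤ (1 / c₂ - 1 / pstar) * U :=
    mul_nonneg (sub_nonneg.2 (one_div_le_one_div_of_le hc₂ hc₂p.le)) hU
  exact ⟨mul_nonneg (sub_nonneg.2 h5) hG, by linarith⟩
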